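/- arXiv:1301.7459 — 8 statements merged into one kernel-verified Lean document; each statement's English description precedes it below -/
import Mathlib

section
/- Let X be a set, let φ : ℝ → X → X be a flow on X (i.e. φ 0 = id and φ (t+s) = (φ t) ∘ (φ s) for all t, s ∈ ℝ), and let u : X → ℝ → ℝ be a strictly positive multiplicative cocycle over φ (i.e. u x (t+s) = u (φ s x) t · u x s for all x ∈ X and t, s ∈ ℝ) such that for every x ∈ X the function t ↦ u x t is continuous. Suppose there is t₀ > 0 with u x t₀ ≤ 1/4 for every x ∈ X, and let β > 0 satisfy 2 < exp(β t₀) < 4. Then for every x ∈ X and every t > 0 one has ∫₀^{t₀} exp(β s) · u x (t+s) ds < exp(−β t) · ∫₀^{t₀} exp(β s) · u x s ds. -/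
/-!
Put `g s = exp (β s) * u x s`. The cocycle identity with `u · t₀ ≤ 1/4` and
`exp (β t₀) < 4` gives `g (s + t₀) < g s` for every `s`. The left-hand side of the claim is
`exp (-β t) * ∫ s in t..t + t₀, g s`, and
`∫ s in 0..t₀, g s - ∫ s in t..t + t₀, g s = ∫ s in 0..t, (g s - g (s + t₀)) > 0`.
-/

/-- Cocycle form of Lemma 5.2: for a strictly positive continuous multiplicative
cocycle `u` over a flow `φ` with `u x t₀ ≤ 1/4` and `2 < exp (β t₀) < 4`, the weighted
integral of the cocycle along the flow decays like `exp (-β t)`. -/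
theorem stmt0 {X : Type*} (φ : ℝ → X → X)
    (hflow0 : φ 0 = id)
    (hflow : ∀ t s : ℝ, φ (t + s) = (φ t) ∘ (φ s))
    (u : X → ℝ → ℝ)
    (hupos : ∀ (x : X) (t : ℝ), 0 < u x t)
    (hcocycle : ∀ (x : X) (t s : ℝ), u x (t + s) = u (φ s x) t * u x s)
    (hcont : ∀ x : X, Continuous (fun t => u x t))
    (t₀ : ℝ) (ht₀ : 0 < t₀) (hquarter : ∀ x : X, u x t₀ ≤ 1 / 4)
    (β : ℝ) (hβ : 0 < β)
    (hβ2 : 2 < Real.exp (β * t₀)) (hβ4 : Real.exp (β * t₀) < 4) :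
    ∀ (x : X) (t : ℝ), 0 < t →
      (∫ s in (0:ℝ)..t₀, Real.exp (β * s) * u x (t + s)) <
        Real.exp (-β * t) * ∫ s in (0:ℝ)..t₀, Real.exp (β * s) * u x s := by
  intro x t ht
  set g : ℝ → ℝ := fun s => Real.exp (β * s) * u x s with hg
  have hgc : Continuous g := by
    have := hcont x
    fun_prop
  have hdecr : ∀ s, g (s + t₀) < g s := by
    intro s
    have hgs : 0 < g s := mul_pos (Real.exp_pos _) (hupos x s)
    have hfactor : Real.exp (β * t₀) * u (φ s x) t₀ < 1 := by
      nlinarith [hquarter (φ s x), hupos (φ s x) t₀]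
    have hshift : g (s + t₀) = (Real.exp (β * t₀) * u (φ s x) t₀) * g s := by
      simp only [hg]
      rw [mul_add, Real.exp_add, add_comm s t₀, hcocycle x t₀ s]
      ring
    rw [hshift]
    exact mul_lt_of_lt_one_left hgs hfactor
  have hleft : (∫ s in (0:ℝ)..t₀, Real.exp (β * s) * u x (t + s)) =
      Real.exp (-β * t) * ∫ s in t..t + t₀, g s := by
    have hsub : ∫ s in (0:ℝ)..t₀, g (t + s) = ∫ s in t..t + t₀, g s := by
      simp
    rw [← hsub, ← intervalIntegral.integral_const_mul]
    congr 1
    funext s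
    simp only [hg]
    rw [← mul_assoc, ← Real.exp_add]
    congr 2
    ring
  have hint : ∀ a b, IntervalIntegrable g MeasureTheory.volume a b :=
    fun a b => hgc.intervalIntegrable a b
  have hswap := intervalIntegral.integral_interval_sub_interval_comm
    (hint 0 t₀) (hint t (t + t₀)) (hint 0 t)
  have hshift : ∫ s in (0:ℝ)..t, g (s + t₀) = ∫ s in t₀..t + t₀, g s := by
    simp
  have hlt : ∫ s in (0:ℝ)..t, g (s + t₀) < ∫ s in (0:ℝ)..t, g s :=
    intervalIntegral.integral_lt_integral_of_continuousOn_of_le_of_exists_lt ht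
      (by fun_prop) hgc.continuousOn (fun s _ => (hdecr s).le)
      ⟨0, ⟨le_rfl, ht.le⟩, hdecr 0⟩
  rw [hleft]
  refine mul_lt_mul_of_pos_left ?_ (Real.exp_pos _)
  linarith
end

section
/- Let A and B be m×m real matrices admitting proximal decompositions (λ_A, P_A, R_A) and (λ_B, P_B, R_B) respectively: λ_A, λ_B are nonzero real numbers, P_A·P_A = P_A, P_A·R_A = R_A·P_A = 0, A = λ_A·P_A + R_A, with constants C_A ≥ 0 and δ_A ∈ [0,1) such that ‖R_Aⁿ‖ ≤ C_A · δ_Aⁿ · |λ_A|ⁿ for all n ≥ 1, and similarly for B. Then the sequence trace(Aⁿ · Bⁿ) / (λ_Aⁿ · λ_Bⁿ) converges to trace(P_A · P_B) as n → ∞. -/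
/-!
Since `P * P = P` and `P * R = R * P = 0`, the cross terms of `(λ P + R) ^ n` vanish, so
`A ^ n = λ ^ n P + R ^ n` for `n ≥ 1`. The bound on `R ^ n` then gives `A ^ n / λ ^ n → P`
(`tendsto_inv_smul_pow`). Applying this to `A` and `B` and using continuity of multiplication
and of the trace yields the limit.
-/

attribute [local instance] Matrix.normedAddCommGroup

theorem proximal_pow_succ {m : ℕ} {P R : Matrix (Fin m) (Fin m) ℝ} (lam : ℝ)
    (hPP : P * P = P) (hPR : P * R = 0) (hRP : R * P = 0) (n : ℕ) :
    (lam • P + R) ^ (n + 1) = lam ^ (n + 1) • P + R ^ (n + 1) := by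
  induction n with
  | zero => simp
  | succ k ih =>
    have hR : R ^ (k + 1) * P = 0 := by rw [pow_succ, mul_assoc, hRP, mul_zero]
    rw [pow_succ, ih, add_mul, mul_add, mul_add, smul_mul_smul_comm, hPP, smul_mul_assoc, hPR,
      mul_smul_comm, hR, ← pow_succ, ← pow_succ]
    simp

/-- The normalized powers of a proximal matrix converge to its projection. -/
theorem tendsto_inv_smul_pow {m : ℕ} {A P R : Matrix (Fin m) (Fin m) ℝ} {lam C δ : ℝ}
    (hlam : lam ≠ 0) (hPP : P * P = P) (hPR : P * R = 0) (hRP : R * P = 0)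
    (hA : A = lam • P + R) (hδ0 : 0 ≤ δ) (hδ1 : δ < 1)
    (hR : ∀ n : ℕ, 1 ≤ n → ‖R ^ n‖ ≤ C * δ ^ n * |lam| ^ n) :
    Filter.Tendsto (fun n : ℕ => (lam ^ n)⁻¹ • A ^ n) Filter.atTop (nhds P) := by
  have hrem : Filter.Tendsto (fun n : ℕ => (lam ^ n)⁻¹ • R ^ n) Filter.atTop (nhds 0) := by
    have hgeom : Filter.Tendsto (fun n : ℕ => C * δ ^ n) Filter.atTop (nhds 0) := by
      simpa using (tendsto_pow_atTop_nhds_zero_of_lt_one hδ0 hδ1).const_mul C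
    refine squeeze_zero_norm' ?_ hgeom
    filter_upwards [Filter.eventually_ge_atTop 1] with n hn
    have hpos : 0 < |lam| ^ n := pow_pos (abs_pos.mpr hlam) n
    letI : NormedSpace ℝ (Matrix (Fin m) (Fin m) ℝ) := Matrix.normedSpace
    rw [norm_smul, norm_inv, norm_pow, Real.norm_eq_abs, inv_mul_le_iff₀ hpos]
    linarith [hR n hn]
  have hsum : Filter.Tendsto (fun n : ℕ => P + (lam ^ n)⁻¹ • R ^ n) Filter.atTop (nhds P) := by
    simpa using hrem.const_add P
  refine hsum.congr' ?_
  filter_upwards [Filter.eventually_ge_atTop 1] with n hn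
  obtain ⟨k, rfl⟩ := Nat.exists_eq_add_of_le' hn
  rw [hA, proximal_pow_succ lam hPP hPR hRP, smul_add, smul_smul,
    inv_mul_cancel₀ (pow_ne_zero _ hlam), one_smul]

/-- If `A` and `B` admit proximal decompositions `(λ_A, P_A, R_A)` and
`(λ_B, P_B, R_B)`, then `trace (Aⁿ * Bⁿ) / (λ_Aⁿ·λ_Bⁿ) → trace (P_A * P_B)`. -/
theorem stmt4 (m : ℕ) (A B : Matrix (Fin m) (Fin m) ℝ)
    (lamA lamB : ℝ) (PA RA PB RB : Matrix (Fin m) (Fin m) ℝ)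
    (hlamA : lamA ≠ 0) (hlamB : lamB ≠ 0)
    (hPPA : PA * PA = PA) (hPRA : PA * RA = 0) (hRPA : RA * PA = 0)
    (hAdecomp : A = lamA • PA + RA)
    (CA δA : ℝ) (hCA : 0 ≤ CA) (hδA0 : 0 ≤ δA) (hδA1 : δA < 1)
    (hRA : ∀ n : ℕ, 1 ≤ n → ‖RA ^ n‖ ≤ CA * δA ^ n * |lamA| ^ n)
    (hPPB : PB * PB = PB) (hPRB : PB * RB = 0) (hRPB : RB * PB = 0)
    (hBdecomp : B = lamB • PB + RB)
    (CB δB : ℝ) (hCB : 0 ≤ CB) (hδB0 : 0 ≤ δB) (hδB1 : δB < 1)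
    (hRB : ∀ n : ℕ, 1 ≤ n → ‖RB ^ n‖ ≤ CB * δB ^ n * |lamB| ^ n) :
    Filter.Tendsto (fun n : ℕ => (A ^ n * B ^ n).trace / (lamA ^ n * lamB ^ n))
      Filter.atTop (nhds ((PA * PB).trace)) := by
  have hlim := (tendsto_inv_smul_pow hlamA hPPA hPRA hRPA hAdecomp hδA0 hδA1 hRA).mul
    (tendsto_inv_smul_pow hlamB hPPB hPRB hRPB hBdecomp hδB0 hδB1 hRB)
  have htr : Continuous (fun M : Matrix (Fin m) (Fin m) ℝ => M.trace) :=
    continuous_id.matrix_trace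
  refine ((htr.tendsto _).comp hlim).congr fun n => ?_
  simp only [Function.comp_apply, smul_mul_smul_comm, Matrix.trace_smul, smul_eq_mul]
  rw [div_eq_inv_mul, mul_inv]
end

section
/- Let E be a real normed vector space, U ⊆ E an open set, z ∈ U, v ∈ E, and K ∈ ℝ. Let G : U → ℝ and, for each n ∈ ℕ, let G_n : U → ℝ and h_n : U → ℝ be functions differentiable at z, with G(z) > 0 and G_n(z) > 0 for all n, and such that G(x) = G_n(x) · (1 + h_n(x)) for all x ∈ U and all n. Suppose each G_n has log-type K at v, i.e. D_z G_n(v) = K · G_n(z) · log(G_n(z)), and that the family (h_n) decays at v, i.e. h_n(z) → 0 and D_z h_n(v) → 0 as n → ∞. Then G has log-type K at v: D_z G(v) = K · G(z) · log(G(z)). -/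
/-!
By the product rule, `D G(v) = G_n(z) · D h_n(v) + (1 + h_n(z)) · K · G_n(z) · log G_n(z)` for
every `n`. Since `h_n(z) → 0` and `G(z) > 0`, `G_n(z) = G(z) / (1 + h_n(z))` tends to `G(z)`, so
letting `n → ∞` gives the claim by continuity of `log` at `G(z) ≠ 0`.
-/

/-- Lemma 9.2: if `G = G_n · (1 + h_n)` on an open set `U`, each `G_n` has log-type `K`
at `v`, and `(h_n)` decays at `v`, then `G` has log-type `K` at `v`. -/
theorem stmt5 {E : Type*} [NormedAddCommGroup E] [NormedSpace ℝ E]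
    (U : Set E) (hU : IsOpen U) (z : E) (hz : z ∈ U) (v : E) (K : ℝ)
    (G : E → ℝ) (Gn hn : ℕ → E → ℝ)
    (hGd : DifferentiableAt ℝ G z)
    (hGnd : ∀ n : ℕ, DifferentiableAt ℝ (Gn n) z)
    (hhnd : ∀ n : ℕ, DifferentiableAt ℝ (hn n) z)
    (hGpos : 0 < G z) (hGnpos : ∀ n : ℕ, 0 < Gn n z)
    (heq : ∀ n : ℕ, ∀ x ∈ U, G x = Gn n x * (1 + hn n x))
    (hlogtype : ∀ n : ℕ, fderiv ℝ (Gn n) z v = K * Gn n z * Real.log (Gn n z))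
    (hdecay0 : Filter.Tendsto (fun n : ℕ => hn n z) Filter.atTop (nhds 0))
    (hdecay1 : Filter.Tendsto (fun n : ℕ => fderiv ℝ (hn n) z v) Filter.atTop (nhds 0)) :
    fderiv ℝ G z v = K * G z * Real.log (G z) := by
  have hne (n : ℕ) : 1 + hn n z ≠ 0 := fun h0 => by
    have h := heq n z hz
    rw [h0, mul_zero] at h
    exact hGpos.ne' h
  have hlim1 : Filter.Tendsto (fun n => 1 + hn n z) Filter.atTop (nhds 1) := by
    simpa using hdecay0.const_add 1
  have hlimG : Filter.Tendsto (fun n => Gn n z) Filter.atTop (nhds (G z)) := by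
    have hquot : (fun n => Gn n z) = fun n => G z / (1 + hn n z) := by
      funext n
      rw [eq_div_iff (hne n), heq n z hz]
    rw [hquot]
    simpa [Pi.div_def] using (tendsto_const_nhds (x := G z)).div hlim1 one_ne_zero
  have hprod (n : ℕ) : fderiv ℝ G z v =
      Gn n z * fderiv ℝ (hn n) z v + (1 + hn n z) * (K * Gn n z * Real.log (Gn n z)) := by
    have hev : G =ᶠ[nhds z] fun x => Gn n x * (1 + hn n x) := by
      filter_upwards [hU.mem_nhds hz] with x hx using heq n x hx
    have hd := (hGnd n).hasFDerivAt.mul ((hhnd n).hasFDerivAt.const_add 1)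
    rw [(hd.congr_of_eventuallyEq hev).fderiv, ← hlogtype n]
    simp
  -- The left side of the product rule is constant in `n`; compare it with the limit of the right.
  have hlim := (hlimG.mul hdecay1).add
    (hlim1.mul ((hlimG.const_mul K).mul (hlimG.log hGpos.ne')))
  have hconst := tendsto_nhds_unique
    (tendsto_const_nhds.congr hprod) hlim
  simpa using hconst
end

section
/- Let q ≥ 1 and let f_1, …, f_q : (−1,1) → ℝ and θ_1, …, θ_q : (−1,1) → ℝ be real-analytic functions, and let g_1, …, g_q : (−1,1) → ℂ be real-analytic, such that: 1 > f_1(t) > f_2(t) > ⋯ > f_q(t) > 0 for all t ∈ (−1,1); θ_q′(0) = 0; and g_q(0) is a nonzero real number. For each n ∈ ℕ define F_n : (−1,1) → ℝ by F_n(t) = 1 + Σ_{p=1}^{q} f_p(t)ⁿ · Re(e^{i n θ_p(t)} g_p(t)). Suppose there exist K ∈ ℝ and N ∈ ℕ such that for every n ≥ N one has F_n(0) > 0 and F_n′(0) = K · F_n(0) · log(F_n(0)). Then f_q′(0) = 0. -/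
/-!
Write `l_p = f_p e^{iθ_p}`, so that `F_n = 1 + x_n` with `x_n = ∑ Re (l_p ^ n g_p)`. At `t = 0`
the derivative is `F_n' = ∑ Re (n c_p l_p ^ n + g_p' l_p ^ n)` with `c_p = (l_p' / l_p) g_p`,
and for the last index `c_q = (f_q' / f_q) g_q` is real because `θ_q' = 0`.

On the other side, `x_n = O(r ^ n)` with `r = f_1(0) < 1`, so replacing `(1 + x) log (1 + x)` by
its Taylor polynomial of large order changes `K F_n log F_n` by `O(ρ ^ n)` with `ρ < f_q(0)`
(`exists_taylor`). A polynomial in `x_n` is a pure exponential sum `∑ C_j μ_j ^ n`, with no terms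
`n μ ^ n`; these sums form an algebra (`expSums`). Hence a combination of the `n l_p ^ n`, their
conjugates and pure exponentials is `O(ρ ^ n)`. A suitable polynomial in the shift operator
isolates the coefficient of `n l_q ^ n` (`coeff_eq_zero`), which must therefore vanish. As the
moduli `f_p(0)` are distinct, this coefficient only involves `c_q`: it is `c_q / 2`, or `c_q` if
`l_q` is real. So `c_q = 0`, that is, `f_q' = 0`.
-/

open Filter Asymptotics Polynomial ComplexConjugate

/-- The geometric sequence `n ↦ μ ^ n`, as a monoid homomorphism in the ratio `μ`. -/
def geomSeq : ℂ →* (ℕ → ℂ) where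
  toFun μ n := μ ^ n
  map_one' := by ext n; simp
  map_mul' μ ν := by ext n; simp [mul_pow]

/-- The algebra of pure exponential sums `n ↦ ∑ c_j μ_j ^ n`. -/
def expSums : Subalgebra ℂ (ℕ → ℂ) := Algebra.adjoin ℂ (MonoidHom.mrange geomSeq : Set (ℕ → ℂ))

/-- The shift operator `(E u) n = u (n + 1)`. -/
def shiftOp : Module.End ℂ (ℕ → ℂ) := LinearMap.funLeft ℂ ℂ Nat.succ

/-- The sequence `n ↦ n μ ^ n`, a generalized eigenvector of the shift. -/
def nGeomSeq (μ : ℂ) : ℕ → ℂ := fun n => n * μ ^ n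

lemma shiftOp_apply (u : ℕ → ℂ) (n : ℕ) : shiftOp u n = u (n + 1) := rfl

lemma geomSeq_mem (μ : ℂ) : geomSeq μ ∈ expSums := Algebra.subset_adjoin ⟨μ, rfl⟩

lemma aeval_shiftOp_geomSeq (P : ℂ[X]) (μ : ℂ) :
    aeval shiftOp P (geomSeq μ) = P.eval μ • geomSeq μ := by
  apply Module.End.aeval_apply_of_hasEigenvector
  refine ⟨Module.End.mem_eigenspace_iff.2 ?_, fun h => ?_⟩
  · ext n
    simp [shiftOp_apply, geomSeq, pow_succ, mul_comm]
  · simpa [geomSeq] using congrFun h 0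

/-- `n μ ^ n` is `μ` times the `μ`-derivative of `μ ^ n`, whence the factor `P'(μ)`. -/
lemma aeval_shiftOp_nGeomSeq (P : ℂ[X]) (μ : ℂ) :
    aeval shiftOp P (nGeomSeq μ) =
      P.eval μ • nGeomSeq μ + (μ * P.derivative.eval μ) • geomSeq μ := by
  induction P using Polynomial.induction_on' with
  | add p q hp hq =>
    simp only [map_add, LinearMap.add_apply, hp, hq, eval_add]
    module
  | monomial k a =>
    have h : ∀ k n, (shiftOp ^ k) (nGeomSeq μ) n = (n + k : ℕ) * μ ^ (n + k) := by
      intro k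
      induction k with
      | zero => intro n; simp [nGeomSeq]
      | succ k ih =>
        intro n
        rw [pow_succ', Module.End.mul_apply, shiftOp_apply, ih]
        congr 2 <;> ring_nf
    ext n
    simp only [aeval_monomial, Module.End.mul_apply, Module.algebraMap_end_apply, Pi.smul_apply, h,
      Pi.add_apply, eval_monomial, derivative_monomial, nGeomSeq, geomSeq, smul_eq_mul,
      MonoidHom.coe_mk, OneHom.coe_mk]
    rcases k with _ | k
    · simp
    · push_cast
      ring

/-- A pure exponential sum is annihilated by every polynomial in the shift that vanishes on its
finite set of exponents; simple zeros suffice. -/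
lemma exists_annihilator {y : ℕ → ℂ} (hy : y ∈ expSums) :
    ∃ S : Finset ℂ, ∀ P : ℂ[X], (∀ μ ∈ S, P.eval μ = 0) → aeval shiftOp P y = 0 := by
  have hy' : y ∈ Submodule.span ℂ (MonoidHom.mrange geomSeq : Set (ℕ → ℂ)) := by
    have h := Algebra.adjoin_eq_span ℂ (MonoidHom.mrange geomSeq : Set (ℕ → ℂ))
    rw [Submonoid.closure_eq] at h
    rw [← h]
    exact hy
  clear hy
  induction hy' using Submodule.span_induction with
  | mem x hx =>
    obtain ⟨μ, rfl⟩ := hx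
    exact ⟨{μ}, fun P hP => by simp [aeval_shiftOp_geomSeq, hP μ (by simp)]⟩
  | zero => exact ⟨∅, fun P _ => by simp⟩
  | add x y hx hy ihx ihy =>
    classical
    obtain ⟨S, hS⟩ := ihx
    obtain ⟨T, hT⟩ := ihy
    refine ⟨S ∪ T, fun P hP => ?_⟩
    rw [map_add, hS P fun μ h => hP μ (by simp [h]), hT P fun μ h => hP μ (by simp [h]), add_zero]
  | smul a x hx ih =>
    obtain ⟨S, hS⟩ := ih
    exact ⟨S, fun P hP => by rw [map_smul, hS P hP, smul_zero]⟩

lemma isBigO_aeval_shiftOp {u : ℕ → ℂ} {ρ : ℝ} (hu : u =O[atTop] fun n => ρ ^ n) (P : ℂ[X]) :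
    aeval shiftOp P u =O[atTop] fun n => ρ ^ n := by
  induction P using Polynomial.induction_on' with
  | add p q hp hq =>
    rw [map_add, LinearMap.add_apply]
    exact hp.add hq
  | monomial k a =>
    have h : ∀ k, (shiftOp ^ k) u =O[atTop] fun n => ρ ^ n := by
      intro k
      induction k with
      | zero => simpa using hu
      | succ k ih =>
        rw [pow_succ', Module.End.mul_apply]
        have h1 := ih.comp_tendsto (tendsto_add_atTop_nat 1)
        refine IsBigO.trans h1 ?_
        refine IsBigO.of_bound |ρ| (Eventually.of_forall fun n => ?_)
        simp [pow_succ, mul_comm]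
    rw [aeval_monomial, Module.End.mul_apply, Module.algebraMap_end_apply]
    exact (h k).const_smul_left a

/-- If a combination of sequences `n ν ^ n` plus a pure exponential sum is `O(ρ ^ n)` with
`ρ < |μ|`, then the total coefficient of `n μ ^ n` vanishes: apply to the sequence a
polynomial in the shift with a simple root at `μ` and double roots at the other exponents. -/
lemma coeff_eq_zero {ι : Type*} (s : Finset ι) (ν b : ι → ℂ) (μ : ℂ) (hμ : μ ≠ 0)
    {y : ℕ → ℂ} (hy : y ∈ expSums) {ρ : ℝ} (hρ0 : 0 ≤ ρ) (hρ : ρ < ‖μ‖)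
    (hO : (∑ i ∈ s, b i • nGeomSeq (ν i) + y) =O[atTop] fun n => ρ ^ n) :
    ∑ i ∈ s with ν i = μ, b i = 0 := by
  classical
  obtain ⟨S, hS⟩ := exists_annihilator hy
  set R : Finset ℂ := (S ∪ s.image ν).erase μ with hR
  set Q : ℂ[X] := ∏ z ∈ R, (X - C z) ^ 2 with hQ
  set P : ℂ[X] := (X - C μ) * Q with hP
  have hQμ : Q.eval μ ≠ 0 := by
    rw [hQ, eval_prod, Finset.prod_ne_zero_iff]
    intro z hz
    have : z ≠ μ := (Finset.mem_erase.1 hz).1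
    simpa [sub_eq_zero] using this.symm
  have hPμ : P.eval μ = 0 := by simp [hP]
  have hP'μ : P.derivative.eval μ = Q.eval μ := by simp [hP, derivative_mul]
  have hdouble : ∀ z ∈ R, P.eval z = 0 ∧ P.derivative.eval z = 0 := by
    intro z hz
    obtain ⟨W, hW⟩ : (X - C z) ^ 2 ∣ P := (Finset.dvd_prod_of_mem _ hz).mul_left _
    rw [hW]
    constructor <;> simp [derivative_mul, derivative_pow]
  have hPy : aeval shiftOp P y = 0 := by
    refine hS P fun z hz => ?_
    by_cases h : z = μ
    · rw [h, hPμ]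
    · exact (hdouble z (by simp [hR, h, hz])).1
  have hterm : ∀ i ∈ s, aeval shiftOp P (b i • nGeomSeq (ν i)) =
      (if ν i = μ then b i else 0) • ((μ * Q.eval μ) • geomSeq μ) := by
    intro i hi
    rw [map_smul, aeval_shiftOp_nGeomSeq]
    split_ifs with h
    · rw [h, hPμ, hP'μ, zero_smul, zero_add]
    · have := hdouble (ν i) (by
        simp only [hR, Finset.mem_erase, Finset.mem_union]
        exact ⟨h, Or.inr (Finset.mem_image_of_mem _ hi)⟩)
      simp [this.1, this.2]
  have hO' := isBigO_aeval_shiftOp hO P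
  rw [map_add, hPy, add_zero, map_sum, Finset.sum_congr rfl hterm, ← Finset.sum_smul,
    ← Finset.sum_filter] at hO'
  by_contra hne
  have h1 : geomSeq μ =O[atTop] fun n => ρ ^ n := by
    rw [smul_smul] at hO'
    exact (isBigO_const_smul_left (mul_ne_zero hne (mul_ne_zero hμ hQμ))).1 hO'
  have h2 : (fun n : ℕ => ρ ^ n) =o[atTop] fun n => ‖μ‖ ^ n :=
    isLittleO_pow_pow_of_lt_left hρ0 hρ
  have h3 : (fun n : ℕ => ‖μ‖ ^ n) =o[atTop] fun n : ℕ => ‖μ‖ ^ n := by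
    have h4 := (h1.trans_isLittleO h2).norm_left
    refine h4.congr_left fun n => ?_
    simp [geomSeq]
  have h5 := isLittleO_irrefl (f'' := fun n : ℕ => ‖μ‖ ^ n) (l := atTop)
    (Eventually.of_forall fun n => pow_ne_zero n (norm_ne_zero_iff.2 hμ)).frequently
  exact h5 h3

lemma ofReal_re_eq (z : ℂ) : ((z.re : ℝ) : ℂ) = (1 / 2 : ℂ) * z + (1 / 2 : ℂ) * conj z := by
  rw [Complex.re_eq_add_conj]; ring

/-- Taylor expansion of `(1 + x) log (1 + x)` at `0`. -/
lemma exists_taylor (m : ℕ) : ∃ t : ℕ → ℝ,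
    (fun x : ℝ => (1 + x) * Real.log (1 + x) - ∑ k ∈ Finset.range m, t k * x ^ k)
      =O[nhds 0] fun x => x ^ m := by
  have ha : AnalyticAt ℝ (fun x : ℝ => (1 + x) * Real.log (1 + x)) 0 := by
    have h1 : AnalyticAt ℝ (fun x : ℝ => 1 + x) 0 := by fun_prop
    exact h1.mul (h1.log (by norm_num))
  obtain ⟨p, hp⟩ := ha
  refine ⟨p.coeff, ?_⟩
  have h := hp.isBigO_sub_partialSum_pow m
  refine IsBigO.trans (h.congr_left fun x => ?_) ?_
  · simp [FormalMultilinearSeries.partialSum, mul_comm]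
  · exact IsBigO.of_bound 1 (Eventually.of_forall fun x => by simp)

/-- The lemma in terms of the data at `t = 0`: `L p` is the value of `f_p e^{iθ_p}`, and
`c p`, `d p` are the coefficients of `n (L p) ^ n` and `(L p) ^ n` in the derivative of
`(f_p e^{iθ_p}) ^ n g_p`. -/
theorem core {ι : Type*} [Fintype ι] (L c d g : ι → ℂ) (q : ι) (r : ℝ) (hr0 : 0 ≤ r) (hr1 : r < 1)
    (hLr : ∀ p, ‖L p‖ ≤ r) (hLq : L q ≠ 0) (hne : ∀ p, p ≠ q → ‖L p‖ ≠ ‖L q‖)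
    (hc : (c q).im = 0) (K : ℝ) (N : ℕ) (x : ℕ → ℝ) (hx : ∀ n, x n = ∑ p, (L p ^ n * g p).re)
    (h : ∀ n, N ≤ n → ∑ p, (n * L p ^ n * c p + L p ^ n * d p).re =
      K * ((1 + x n) * Real.log (1 + x n))) : c q = 0 := by
  classical
  obtain ⟨m, hm⟩ := exists_pow_lt_of_lt_one (norm_pos_iff.2 hLq) hr1
  obtain ⟨t, ht⟩ := exists_taylor m
  -- `x n` is a pure exponential sum, of size `O(r ^ n)`
  have hre : ∀ a : ι → ℂ, (fun n => ((∑ p, (L p ^ n * a p).re : ℝ) : ℂ)) ∈ expSums := by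
    intro a
    have : (fun n => ((∑ p, (L p ^ n * a p).re : ℝ) : ℂ)) =
        ∑ p, ((1 / 2 * a p) • geomSeq (L p) + (1 / 2 * conj (a p)) • geomSeq (conj (L p))) := by
      ext n
      simp only [Complex.ofReal_sum, ofReal_re_eq, Finset.sum_apply, Pi.add_apply, Pi.smul_apply,
        smul_eq_mul, geomSeq, MonoidHom.coe_mk, OneHom.coe_mk, map_mul, map_pow]
      exact Finset.sum_congr rfl fun p _ => by ring
    rw [this]
    exact sum_mem fun p _ => add_mem (expSums.smul_mem (geomSeq_mem _) _)
      (expSums.smul_mem (geomSeq_mem _) _)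
  have hxE : (fun n => (x n : ℂ)) ∈ expSums := by
    simpa only [← hx] using hre g
  have hxO : x =O[atTop] fun n => r ^ n := by
    have : x = fun n => ∑ p, (L p ^ n * g p).re := funext hx
    rw [this]
    refine IsBigO.fun_sum fun p _ => IsBigO.of_bound ‖g p‖ (Eventually.of_forall fun n => ?_)
    calc ‖(L p ^ n * g p).re‖ ≤ ‖L p ^ n * g p‖ := Complex.abs_re_le_norm _
      _ = ‖g p‖ * ‖L p‖ ^ n := by rw [norm_mul, norm_pow, mul_comm]
      _ ≤ ‖g p‖ * ‖r ^ n‖ := by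
        rw [norm_pow, Real.norm_of_nonneg hr0]
        gcongr
        exact hLr p
  have hx0 : Tendsto x atTop (nhds 0) :=
    hxO.trans_tendsto (tendsto_pow_atTop_nhds_zero_of_lt_one hr0 hr1)
  have hrem : (fun n => (1 + x n) * Real.log (1 + x n) - ∑ k ∈ Finset.range m, t k * x n ^ k)
      =O[atTop] fun n => (r ^ m) ^ n := by
    refine (ht.comp_tendsto hx0).trans ((hxO.pow m).congr_right fun n => ?_)
    rw [← pow_mul, ← pow_mul, mul_comm]
  -- the pure exponential part of the left side of `h` minus `K` times the Taylor polynomial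
  set y : ℕ → ℂ := (fun n => ((∑ p, (L p ^ n * d p).re : ℝ) : ℂ)) -
    (K : ℂ) • ∑ k ∈ Finset.range m, (t k : ℂ) • (fun n => (x n : ℂ)) ^ k with hy
  have hyE : y ∈ expSums := sub_mem (hre d) (expSums.smul_mem
    (sum_mem fun k _ => expSums.smul_mem (pow_mem hxE k) _) _)
  -- index set: each `p` contributes the exponents `L p` and `conj (L p)`
  let ν : ι × Bool → ℂ := fun i => if i.2 then L i.1 else conj (L i.1)
  let b : ι × Bool → ℂ := fun i => 1 / 2 * if i.2 then c i.1 else conj (c i.1)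
  have hO : (∑ i, b i • nGeomSeq (ν i) + y) =O[atTop] fun n => (r ^ m) ^ n := by
    refine IsBigO.congr' (f₁ := fun n => (((K * ((1 + x n) * Real.log (1 + x n) -
      ∑ k ∈ Finset.range m, t k * x n ^ k) : ℝ)) : ℂ)) (g₁ := fun n => (r ^ m) ^ n) ?_ ?_
      EventuallyEq.rfl
    · refine IsBigO.trans ?_ (hrem.const_mul_left K)
      exact IsBigO.of_bound 1 (Eventually.of_forall fun n => by
        rw [Complex.norm_real, one_mul])
    · filter_upwards [eventually_ge_atTop N] with n hn
      rw [mul_sub, ← h n hn]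
      simp only [hy, Pi.add_apply, Pi.sub_apply, Finset.sum_apply, Pi.smul_apply, Pi.pow_apply,
        smul_eq_mul, Fintype.sum_prod_type, Fintype.sum_bool, ν, b, nGeomSeq, if_true,
        Complex.ofReal_sub, Complex.ofReal_mul, Complex.ofReal_sum, Complex.ofReal_pow,
        Complex.add_re, Complex.ofReal_add, Finset.sum_add_distrib]
      rw [← add_sub_assoc]
      congr 2
      rw [← Finset.sum_add_distrib]
      refine Finset.sum_congr rfl fun p _ => ?_
      rw [ofReal_re_eq]
      simp
      ring
  have key := coeff_eq_zero Finset.univ ν b (L q) hLq hyE (pow_nonneg hr0 m) hm hO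
  have hcq : conj (c q) = c q := Complex.conj_eq_iff_im.2 hc
  -- only the two indices over `q` can contribute, and both contributions equal `c q / 2`
  rw [Finset.sum_filter, Fintype.sum_prod_type, Finset.sum_eq_single q] at key
  · simp only [Fintype.sum_bool, ν, b, if_true, hcq] at key
    split_ifs at key <;> simp_all
  · intro p _ hp
    have h1 : ν (p, true) ≠ L q := fun e => hne p hp (by simp [← e, ν])
    have h2 : ν (p, false) ≠ L q := fun e => hne p hp (by simp [← e, ν])
    simp [h1, h2]
  · simp

/-- Lemma 10.3 (the technical lemma): with real-analytic data
`1 > f_1(t) > ⋯ > f_q(t) > 0`, `θ_q'(0) = 0`, `g_q(0)` a nonzero real number, if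
`F_n(t) = 1 + Σ_p f_p(t)ⁿ Re(e^{inθ_p(t)} g_p(t))` satisfies
`F_n'(0) = K F_n(0) log F_n(0)` for all large `n`, then `f_q'(0) = 0`. -/
theorem stmt7 (q : ℕ) (hq : 1 ≤ q)
    (f θ : Fin q → ℝ → ℝ) (g : Fin q → ℝ → ℂ)
    (hfa : ∀ p : Fin q, AnalyticOnNhd ℝ (f p) (Set.Ioo (-1:ℝ) 1))
    (hθa : ∀ p : Fin q, AnalyticOnNhd ℝ (θ p) (Set.Ioo (-1:ℝ) 1))
    (hga : ∀ p : Fin q, AnalyticOnNhd ℝ (g p) (Set.Ioo (-1:ℝ) 1))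
    (hlt1 : ∀ t ∈ Set.Ioo (-1:ℝ) 1, ∀ p : Fin q, f p t < 1)
    (hpos : ∀ t ∈ Set.Ioo (-1:ℝ) 1, ∀ p : Fin q, 0 < f p t)
    (hanti : ∀ t ∈ Set.Ioo (-1:ℝ) 1, StrictAnti (fun p : Fin q => f p t))
    (hθq : deriv (θ ⟨q - 1, by omega⟩) 0 = 0)
    (hgq_real : (g ⟨q - 1, by omega⟩ 0).im = 0)
    (hgq_ne : g ⟨q - 1, by omega⟩ 0 ≠ 0)
    (F : ℕ → ℝ → ℝ)
    (hF : ∀ (n : ℕ) (t : ℝ), F n t = 1 + ∑ p : Fin q,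
      f p t ^ n * (Complex.exp (Complex.I * (n : ℂ) * (θ p t : ℂ)) * g p t).re)
    (K : ℝ) (N : ℕ)
    (hder : ∀ n : ℕ, N ≤ n →
      0 < F n 0 ∧ deriv (F n) 0 = K * F n 0 * Real.log (F n 0)) :
    deriv (f ⟨q - 1, by omega⟩) 0 = 0 := by
  have h0 : (0 : ℝ) ∈ Set.Ioo (-1 : ℝ) 1 := by norm_num
  set z : Fin q := ⟨q - 1, by omega⟩ with hz
  set l : Fin q → ℝ → ℂ := fun p t => (f p t : ℂ) * Complex.exp (Complex.I * (θ p t : ℂ)) with hl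
  -- logarithmic derivative of `l p` at `0`
  set w : Fin q → ℂ := fun p => ((deriv (f p) 0 / f p 0 : ℝ) : ℂ) +
    Complex.I * ((deriv (θ p) 0 : ℝ) : ℂ) with hw
  have hlnorm : ∀ p, ‖l p 0‖ = f p 0 := fun p => by
    simp only [hl]
    rw [norm_mul, mul_comm Complex.I, Complex.norm_exp_ofReal_mul_I, mul_one, Complex.norm_real,
      Real.norm_of_nonneg (hpos 0 h0 p).le]
  have hFl : ∀ n t, F n t = 1 + ∑ p, (l p t ^ n * g p t).re := by
    intro n t
    rw [hF]
    congr 1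
    refine Finset.sum_congr rfl fun p _ => ?_
    rw [← Complex.re_ofReal_mul]
    simp only [hl, mul_pow, ← Complex.exp_nat_mul, Complex.ofReal_pow]
    ring_nf
  have hld : ∀ p, HasDerivAt (l p) (l p 0 * w p) 0 := by
    intro p
    have hf := ((hfa p 0 h0).differentiableAt.hasDerivAt).ofReal_comp
    have hθ := ((hθa p 0 h0).differentiableAt.hasDerivAt).ofReal_comp
    refine (hf.mul ((hθ.const_mul Complex.I).cexp)).congr_deriv ?_
    have : (f p 0 : ℂ) ≠ 0 := by exact_mod_cast (hpos 0 h0 p).ne'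
    simp only [hl, hw]
    push_cast
    field_simp
  have hFd : ∀ n, HasDerivAt (F n) (∑ p, (n * l p 0 ^ n * (w p * g p 0) +
      l p 0 ^ n * deriv (g p) 0).re) 0 := by
    intro n
    have hg := fun p => (hga p 0 h0).differentiableAt.hasDerivAt
    have hterm : ∀ p, HasDerivAt (fun t => (l p t ^ n * g p t).re)
        (n * l p 0 ^ n * (w p * g p 0) + l p 0 ^ n * deriv (g p) 0).re 0 := by
      intro p
      have h1 := ((hld p).fun_pow n).fun_mul (hg p)
      have h2 := Complex.reCLM.hasFDerivAt.comp_hasDerivAt (0 : ℝ) h1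
      refine h2.congr_deriv ?_
      rw [Complex.reCLM_apply]
      congr 2
      rcases n with _ | n
      · simp
      · rw [Nat.add_sub_cancel, pow_succ]; ring
    have h3 := (HasDerivAt.fun_sum (u := Finset.univ) fun p _ => hterm p).const_add 1
    exact h3.congr_of_eventuallyEq (Eventually.of_forall fun t => hFl n t)
  have hwz : w z = ((deriv (f z) 0 / f z 0 : ℝ) : ℂ) := by simp [hw, hθq]
  have hlz : l z 0 ≠ 0 := by
    rw [← norm_ne_zero_iff, hlnorm]; exact (hpos 0 h0 z).ne'
  have hc := core (fun p => l p 0) (fun p => w p * g p 0) (fun p => deriv (g p) 0)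
    (fun p => g p 0) z (f ⟨0, by omega⟩ 0) (hpos 0 h0 _).le (hlt1 0 h0 _)
    (fun p => by
      rw [hlnorm]
      exact (hanti 0 h0).antitone (Fin.mk_le_of_le_val (Nat.zero_le _)))
    hlz (fun p hp => by
      rw [hlnorm, hlnorm]
      exact fun e => hp ((hanti 0 h0).injective e))
    (by rw [hwz, Complex.im_ofReal_mul, hgq_real, mul_zero]) K N (fun n => F n 0 - 1)
    (fun n => by simp [hFl])
    (fun n hn => by
      rw [← (hFd n).deriv, (hder n hn).2]
      ring_nf)
  have hwz0 : w z = 0 := (mul_eq_zero.1 hc).resolve_right hgq_ne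
  rw [hwz, Complex.ofReal_eq_zero, div_eq_zero_iff] at hwz0
  exact hwz0.resolve_right (hpos 0 h0 z).ne'
end

section
/- Let m ≥ 2. Let x̂_0, …, x̂_m ∈ ℝ^m satisfy Σ_{i=0}^{m} x̂_i = 0 and suppose that for every index i, the m vectors {x̂_j : j ≠ i} form a basis of ℝ^m. Let X̂_0, …, X̂_m be linear functionals on ℝ^m satisfying Σ_{i=0}^{m} X̂_i = 0 and suppose that for every index i, the m functionals {X̂_j : j ≠ i} form a basis of the dual space (ℝ^m)^*. Let A, B be invertible linear maps of ℝ^m, and suppose there exist nonzero real numbers a_0, …, a_m and b_0, …, b_m such that X̂_i(A(x̂_j)) = a_i · b_j · X̂_i(B(x̂_j)) for all 0 ≤ i, j ≤ m. Then there exists a nonzero real number c with A = c · B. -/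
/-!
Summing the relation `X i (A (x j)) = a i * b j * X i (B (x j))` over `i` and using `∑ X i = 0`,
`b j ≠ 0` shows that `∑ a i • X i` vanishes on every `B (x j)`. These vectors span, so
`∑ a i • X i = 0`. The linear relations among the members of a frame form a line, spanned by
`(1, …, 1)` (`coeff_eq_of_frame`), so `a` is constant. Dually, summing over `j` shows that `b` is
constant, and `A = (a 0 * b 0) • B` because the `x j` span the space and the `X i` separate points.
-/

/-- Every linear relation among the vectors of a normalized frame has constant coefficients. -/
lemma coeff_eq_of_frame {ι V : Type*} [Fintype ι] [DecidableEq ι] [AddCommGroup V] [Module ℝ V]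
    (v : ι → V) (hsum : ∑ i, v i = 0) (i : ι)
    (hli : LinearIndependent ℝ (fun j : {j : ι // j ≠ i} => v j.1))
    (a : ι → ℝ) (ha : ∑ j, a j • v j = 0) (j : ι) : a j = a i := by
  by_cases hj : j = i
  · rw [hj]
  -- Subtracting `a i` times the relation `hsum` removes `v i` from the relation `ha`.
  have h0 : ∑ j, (a j - a i) • v j = 0 := by
    simp [sub_smul, Finset.sum_sub_distrib, ha, ← Finset.smul_sum, hsum]
  have h1 : ∑ k : {k : ι // k ≠ i}, (a k.1 - a i) • v k.1 = 0 := by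
    rw [Fintype.sum_eq_add_sum_subtype_ne _ i] at h0
    simpa using h0
  exact sub_eq_zero.mp
    (Fintype.linearIndependent_iff.mp hli (fun k => a k.1 - a i) h1 ⟨j, hj⟩)

/-- Injectivity part of Lemma 11.2: if `X̂_i(A x̂_j) = a_i b_j X̂_i(B x̂_j)` for
normalized projective frames `(x̂_j)` and dual frames `(X̂_i)`, with `A, B` invertible,
then `A` is a scalar multiple of `B`. -/
theorem stmt8 (m : ℕ) (hm : 2 ≤ m)
    (x : Fin (m + 1) → (Fin m → ℝ))
    (hxsum : ∑ i, x i = 0)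
    (hxbasis : ∀ i : Fin (m + 1),
      LinearIndependent ℝ (fun j : {j : Fin (m + 1) // j ≠ i} => x j.1) ∧
      Submodule.span ℝ (Set.range (fun j : {j : Fin (m + 1) // j ≠ i} => x j.1)) = ⊤)
    (X : Fin (m + 1) → ((Fin m → ℝ) →ₗ[ℝ] ℝ))
    (hXsum : ∑ i, X i = 0)
    (hXbasis : ∀ i : Fin (m + 1),
      LinearIndependent ℝ (fun j : {j : Fin (m + 1) // j ≠ i} => X j.1) ∧
      Submodule.span ℝ (Set.range (fun j : {j : Fin (m + 1) // j ≠ i} => X j.1)) = ⊤)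
    (A B : (Fin m → ℝ) →ₗ[ℝ] (Fin m → ℝ))
    (hA : Function.Bijective A) (hB : Function.Bijective B)
    (a b : Fin (m + 1) → ℝ) (ha : ∀ i, a i ≠ 0) (hb : ∀ j, b j ≠ 0)
    (h : ∀ i j : Fin (m + 1), X i (A (x j)) = a i * b j * X i (B (x j))) :
    ∃ c : ℝ, c ≠ 0 ∧ A = c • B := by
  have hx_ext : ∀ {W : Type} [AddCommGroup W] [Module ℝ W] (f g : (Fin m → ℝ) →ₗ[ℝ] W),
      (∀ j, f (x j) = g (x j)) → f = g := by
    intro W _ _ f g hfg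
    refine LinearMap.ext_on_range (hxbasis 0).2 fun j => hfg j.1
  have hX_sep : ∀ y : Fin m → ℝ, (∀ i, X i y = 0) → y = 0 := by
    intro y hy
    have hev : Module.Dual.eval ℝ (Fin m → ℝ) y = 0 :=
      LinearMap.ext_on_range (hXbasis 0).2 fun i => by simpa using hy i.1
    exact (Module.forall_dual_apply_eq_zero_iff ℝ y).mp fun f => LinearMap.congr_fun hev f
  have hXa : ∑ i, a i • X i = 0 := by
    have hcomp : (∑ i, a i • X i) ∘ₗ B = 0 := by
      refine hx_ext _ _ fun j => ?_
      have hs : ∑ i, X i (A (x j)) = 0 := by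
        rw [← LinearMap.sum_apply, hXsum, LinearMap.zero_apply]
      have hfac : b j * ∑ i, a i * X i (B (x j)) = 0 := by
        rw [← hs, Finset.mul_sum]
        exact Finset.sum_congr rfl fun i _ => by rw [h]; ring
      simpa [LinearMap.sum_apply] using (mul_eq_zero.mp hfac).resolve_left (hb j)
    refine LinearMap.ext fun y => ?_
    obtain ⟨z, rfl⟩ := hB.2 y
    exact LinearMap.congr_fun hcomp z
  have hxb : ∑ j, b j • x j = 0 := by
    refine hB.1 ?_
    rw [map_zero]
    refine hX_sep _ fun i => ?_
    have hs : ∑ j, X i (A (x j)) = 0 := by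
      rw [← map_sum, ← map_sum, hxsum, map_zero, map_zero]
    have hfac : a i * ∑ j, b j * X i (B (x j)) = 0 := by
      rw [← hs, Finset.mul_sum]
      exact Finset.sum_congr rfl fun j _ => by rw [h]; ring
    simpa [map_sum] using (mul_eq_zero.mp hfac).resolve_left (ha i)
  have ha_const := coeff_eq_of_frame X hXsum 0 (hXbasis 0).1 a hXa
  have hb_const := coeff_eq_of_frame x hxsum 0 (hxbasis 0).1 b hxb
  refine ⟨a 0 * b 0, mul_ne_zero (ha 0) (hb 0), hx_ext _ _ fun j => ?_⟩
  refine sub_eq_zero.mp (hX_sep _ fun i => ?_)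
  rw [map_sub, h, ha_const i, hb_const j, LinearMap.smul_apply, map_smul, smul_eq_mul, sub_self]
end

section
/- Let (X, d) be a metric space and let G be a group acting on X by homeomorphisms such that every g ∈ G acts bilipschitz with respect to d: for each g ∈ G there is K_g ≥ 1 with K_g^{-1} d(x,y) ≤ d(g·x, g·y) ≤ K_g d(x,y) for all x, y ∈ X. Suppose there is an open set U ⊆ X with compact closure such that X = ⋃_{g ∈ G} g·U and the family {g·U}_{g ∈ G} is locally finite: every point of X has an open neighborhood V for which the set {g ∈ G : (g·U) ∩ V ≠ ∅} is finite. Then there exists a G-invariant metric d₀ on X (i.e. d₀(g·x, g·y) = d₀(x, y) for all g ∈ G, x, y ∈ X) which is locally bilipschitz equivalent to d: every point of X has an open neighborhood W and a constant K ≥ 1 such that K^{-1} d(y,z) ≤ d₀(y,z) ≤ K d(y,z) for all y, z ∈ W. -/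
/-!
The invariant metric is obtained by collapsing the complement of `U`. Let `δ` be a `1`-Lipschitz
function which is positive on `U` and zero off `U` (the distance to `Uᶜ`, if `Uᶜ` is nonempty).
Then `ρ x y = min (d x y) (δ x + δ y)` is a pseudometric which is bounded by `d`, agrees with `d`
near every point of `U`, separates every point of `U` from all other points, and vanishes on pairs
of points outside `U`. The metric is `d₀ x y = ⨆ g, ρ (g • x) (g • y)`.

Invariance is immediate by reindexing. By local finiteness only finitely many terms are nonzero for
`x, y` in a small open set, so `d₀` is finite and locally bounded by a multiple of `d`, the
multiple being controlled by finitely many Lipschitz constants. Since the translates of `U` cover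
`X`, near each point some single term `ρ (g • x) (g • y)` equals `d (g • x) (g • y)`, which bounds
`d₀` from below by a multiple of `d`.
-/

open Pointwise

/-- The constant function `1` serves when `U` is the whole space, where the distance to the
(empty) complement would take the junk value `0`. -/
lemma exists_lipschitz_bump {X : Type*} [MetricSpace X] {U : Set X} (hU : IsOpen U) :
    ∃ δ : X → ℝ, (∀ x, 0 ≤ δ x) ∧ (∀ x y, δ x ≤ δ y + dist x y) ∧
      (∀ x ∈ U, 0 < δ x) ∧ (∀ x, x ∉ U → δ x = 0) := by
  rcases (Uᶜ).eq_empty_or_nonempty with h | h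
  · have hu : ∀ x, x ∈ U := by
      rw [Set.compl_empty_iff] at h
      simp [h]
    exact ⟨fun _ => 1, fun _ => zero_le_one, fun x y => by simp, fun _ _ => one_pos,
      fun x hx => absurd (hu x) hx⟩
  · refine ⟨fun x => Metric.infDist x Uᶜ, fun _ => Metric.infDist_nonneg,
      fun x y => Metric.infDist_le_infDist_add_dist, fun x hx => ?_, fun x hx => ?_⟩
    · exact (hU.isClosed_compl.notMem_iff_infDist_pos h).1 (by simpa using hx)
    · exact Metric.infDist_zero_of_mem hx

/-- The pseudometric obtained from `dist` by collapsing the zero set of `δ` to a point, when `δ`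
is nonnegative and `1`-Lipschitz. -/
noncomputable def collapseDist {X : Type*} [MetricSpace X] (δ : X → ℝ) (x y : X) : ℝ :=
  min (dist x y) (δ x + δ y)

lemma collapseDist_triangle {X : Type*} [MetricSpace X] {δ : X → ℝ} (h0 : ∀ x, 0 ≤ δ x)
    (h1 : ∀ x y, δ x ≤ δ y + dist x y) (x y z : X) :
    collapseDist δ x z ≤ collapseDist δ x y + collapseDist δ y z := by
  have := dist_triangle x y z
  have := h1 x y
  have := h1 z y
  have := dist_comm y z
  have := h0 y
  unfold collapseDist
  rcases le_total (dist x y) (δ x + δ y) with a | a <;>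
  rcases le_total (dist y z) (δ y + δ z) with b | b <;>
  simp only [min_eq_left a, min_eq_right a, min_eq_left b, min_eq_right b, min_le_iff]
  · left; linarith
  all_goals right; linarith

/-- Lemma 6.1: a group acting bilipschitz on a metric space, with a locally finite
cover by translates of an open set with compact closure, preserves some metric `d₀`
which is locally bilipschitz equivalent to the original metric. -/
theorem stmt10 {X : Type*} [MetricSpace X] {G : Type*} [Group G] [MulAction G X]
    (hbilip : ∀ g : G, ∃ K : ℝ, 1 ≤ K ∧ ∀ x y : X,
      K⁻¹ * dist x y ≤ dist (g • x) (g • y) ∧ dist (g • x) (g • y) ≤ K * dist x y)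
    (U : Set X) (hUopen : IsOpen U) (hUcomp : IsCompact (closure U))
    (hcover : ∀ x : X, ∃ g : G, x ∈ g • U)
    (hlf : ∀ x : X, ∃ V : Set X, IsOpen V ∧ x ∈ V ∧
      {g : G | (g • U) ∩ V ≠ ∅}.Finite) :
    ∃ d₀ : X → X → ℝ,
      (∀ x y : X, 0 ≤ d₀ x y) ∧
      (∀ x y : X, d₀ x y = d₀ y x) ∧
      (∀ x y z : X, d₀ x z ≤ d₀ x y + d₀ y z) ∧
      (∀ x y : X, d₀ x y = 0 ↔ x = y) ∧
      (∀ (g : G) (x y : X), d₀ (g • x) (g • y) = d₀ x y) ∧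
      (∀ x : X, ∃ W : Set X, IsOpen W ∧ x ∈ W ∧ ∃ K : ℝ, 1 ≤ K ∧
        ∀ y ∈ W, ∀ z ∈ W, K⁻¹ * dist y z ≤ d₀ y z ∧ d₀ y z ≤ K * dist y z) := by
  obtain ⟨δ, h0, h1, hpos, hzero⟩ := exists_lipschitz_bump hUopen
  choose K hK1 hK using hbilip
  have rnn : ∀ x y, 0 ≤ collapseDist δ x y := fun x y =>
    le_min dist_nonneg (add_nonneg (h0 x) (h0 y))
  have rle : ∀ x y, collapseDist δ x y ≤ dist x y := fun x y => min_le_left _ _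
  -- On a set `V` meeting finitely many translates of `U`, all terms are bounded by the same
  -- multiple of `dist`: a nonzero term has `g • y ∈ U` or `g • z ∈ U`.
  have key : ∀ V : Set X, {g : G | (g • U) ∩ V ≠ ∅}.Finite → ∃ C : ℝ, 1 ≤ C ∧
      ∀ y ∈ V, ∀ z ∈ V, ∀ g : G, collapseDist δ (g • y) (g • z) ≤ C * dist y z := by
    intro V hV
    have hKn : ∀ g, 0 ≤ K g := fun g => zero_le_one.trans (hK1 g)
    have hs : 0 ≤ ∑ g ∈ hV.toFinset, K g⁻¹ := Finset.sum_nonneg fun g _ => hKn _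
    refine ⟨1 + ∑ g ∈ hV.toFinset, K g⁻¹, by linarith, fun y hy z hz g => ?_⟩
    by_cases hg : g⁻¹ ∈ hV.toFinset
    · refine (rle _ _).trans ((hK g y z).2.trans ?_)
      gcongr
      have := Finset.single_le_sum (f := fun g => K g⁻¹) (fun g _ => hKn _) hg
      simp only [inv_inv] at this
      linarith
    · have hout : ∀ w ∈ V, g • w ∉ U := by
        intro w hw hwU
        apply hg
        simp only [Set.Finite.mem_toFinset, Set.mem_ofPred_eq]
        exact Set.Nonempty.ne_empty
          ⟨w, Set.mem_inv_smul_set_iff.2 hwU, hw⟩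
      have : collapseDist δ (g • y) (g • z) ≤ 0 :=
        (min_le_right _ _).trans (by rw [hzero _ (hout y hy), hzero _ (hout z hz), add_zero])
      exact this.trans (by positivity)
  have bdd : ∀ x y : X,
      BddAbove (Set.range fun g : G => collapseDist δ (g • x) (g • y)) := by
    intro x y
    obtain ⟨V, -, hxV, hV⟩ := hlf x
    obtain ⟨V', -, hyV, hV'⟩ := hlf y
    obtain ⟨C, -, hC⟩ := key (V ∪ V') ((hV.union hV').subset (by
      intro g hg
      simp only [Set.mem_ofPred_eq, Set.inter_union_distrib_left, ne_eq,
        Set.union_empty_iff, not_and_or] at hg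
      exact hg))
    exact ⟨C * dist x y, by
      rintro _ ⟨g, rfl⟩
      exact hC x (Or.inl hxV) y (Or.inr hyV) g⟩
  have hmem : ∀ x : X, ∃ g : G, g • x ∈ U := by
    intro x
    obtain ⟨g, hg⟩ := hcover x
    exact ⟨g⁻¹, Set.mem_smul_set_iff_inv_smul_mem.1 hg⟩
  refine ⟨fun x y => ⨆ g : G, collapseDist δ (g • x) (g • y), ?_, ?_, ?_, ?_, ?_, ?_⟩
  · exact fun x y => Real.iSup_nonneg fun g => rnn _ _
  · intro x y
    simp only [collapseDist, dist_comm, add_comm]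
  · exact fun x y z => ciSup_le fun g => (collapseDist_triangle h0 h1 _ (g • y) _).trans
      (add_le_add (le_ciSup (bdd x y) g) (le_ciSup (bdd y z) g))
  · intro x y
    constructor
    · intro h
      by_contra hne
      obtain ⟨g, hg⟩ := hmem x
      have h2 : 0 < collapseDist δ (g • x) (g • y) :=
        lt_min (dist_pos.2 fun e => hne (MulAction.injective g e))
          (add_pos_of_pos_of_nonneg (hpos _ hg) (h0 _))
      exact absurd h (h2.trans_le (le_ciSup (bdd x y) g)).ne'
    · rintro rfl
      have : ∀ g : G, collapseDist δ (g • x) (g • x) = 0 := fun g =>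
        le_antisymm ((rle _ _).trans (dist_self _).le) (rnn _ _)
      simp [this]
  · intro g x y
    simp only [smul_smul]
    exact (Equiv.mulRight g).iSup_comp (g := fun h : G => collapseDist δ (h • x) (h • y))
  · intro x
    obtain ⟨V, hVo, hxV, hV⟩ := hlf x
    obtain ⟨C, hC1, hC⟩ := key V hV
    obtain ⟨g, hg⟩ := hmem x
    have hr := hpos _ hg
    have hcont : Continuous fun w : X => g • w :=
      (LipschitzWith.of_dist_le_mul (K := (K g).toNNReal) fun a b => by
        rw [Real.coe_toNNReal _ (zero_le_one.trans (hK1 g))]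
        exact (hK g a b).2).continuous
    -- On the ball of radius `δ (g • x) / 4` distances are below `δ (g • x) / 2`, whereas
    -- `δ ≥ 3 δ (g • x) / 4`, so there `collapseDist δ` equals `dist`.
    refine ⟨V ∩ (fun w : X => g • w) ⁻¹' Metric.ball (g • x) (δ (g • x) / 4),
      hVo.inter (Metric.isOpen_ball.preimage hcont),
      ⟨hxV, Metric.mem_ball_self (by linarith)⟩, max C (K g), hC1.trans (le_max_left _ _), ?_⟩
    rintro y ⟨hy, hyb⟩ z ⟨hz, hzb⟩
    have hKp : 0 < K g := zero_lt_one.trans_le (hK1 g)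
    constructor
    · have heq : dist (g • y) (g • z) ≤ collapseDist δ (g • y) (g • z) := by
        simp only [Set.mem_preimage, Metric.mem_ball] at hyb hzb
        have a1 := h1 (g • x) (g • y)
        have a2 := h1 (g • x) (g • z)
        have a3 := dist_triangle_right (g • y) (g • z) (g • x)
        rw [dist_comm] at a1 a2
        exact le_min le_rfl (by linarith)
      calc (max C (K g))⁻¹ * dist y z ≤ (K g)⁻¹ * dist y z := by
            gcongr
            exact le_max_right _ _
        _ ≤ dist (g • y) (g • z) := (hK g y z).1
        _ ≤ _ := heq
        _ ≤ _ := le_ciSup (bdd y z) g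
    · refine ciSup_le fun h => (hC y hy z hz h).trans ?_
      gcongr
      exact le_max_left _ _
end

section
/- Let X be a compact metric space, f : X → X a homeomorphism, E a complex Banach space, D ⊆ ℂ a nonempty open set, and F : D × X × E → E a continuous map such that: (i) there is k ∈ [0,1) with ‖F(u,x,w) − F(u,x,w′)‖ ≤ k‖w − w′‖ for all u ∈ D, x ∈ X and w, w′ ∈ E; (ii) for each x ∈ X the map (u,w) ↦ F(u,x,w) is analytic on D × E; and (iii) sup{‖F(u,x,0)‖ : u ∈ D, x ∈ X} < ∞. Then there exists a unique bounded continuous map η : D × X → E satisfying η(u, f(x)) = F(u, x, η(u,x)) for all (u,x) ∈ D × X; moreover, for each x ∈ X the map u ↦ η(u,x) is analytic on D. -/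
/-!
The invariance equation says that `η` is a fixed point of the graph transform
`(Γ s)(u, x) = F(u, f⁻¹ x, s(u, f⁻¹ x))`, which contracts the sup-distance of sections by the
factor `k`. The iterates `Γⁿ 0` are bounded, continuous, and analytic in `u`; successive ones differ
by at most `M kⁿ`, where `M` bounds `F(u, x, 0)`. They therefore converge uniformly on `D × X` to a
section that inherits continuity, analyticity (a locally uniform limit of holomorphic functions is
holomorphic) and the fixed point equation. Two bounded invariant sections differ by at most a
constant times `kⁿ` for every `n`, hence coincide.
-/

open Filter Topology

/-- The iterates `Γⁿ 0` of the zero section under the graph transform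
`(Γ s)(u, x) = F(u, g x, s(u, g x))`; here `g` plays the role of `f⁻¹`. -/
def graphIter {X E : Type*} [Zero E] (F : ℂ → X → E → E) (g : X → X) : ℕ → ℂ → X → E
  | 0 => fun _ _ => 0
  | n + 1 => fun u x => F u (g x) (graphIter F g n u (g x))


/-- Trivialized-bundle form of Theorem 8.6: a fiberwise contraction
`F : D × X × E → E`, analytic in the disk and fiber variables and covering `id × f`,
has a unique bounded continuous invariant section, which is analytic in the
disk parameter. -/
theorem stmt11 {X : Type*} [MetricSpace X] [CompactSpace X]
    (f : X → X) (hf : IsHomeomorph f)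
    {E : Type*} [NormedAddCommGroup E] [NormedSpace ℂ E] [CompleteSpace E]
    (D : Set ℂ) (hD : IsOpen D) (hDne : D.Nonempty)
    (F : ℂ → X → E → E)
    (hFcont : ContinuousOn (fun p : ℂ × X × E => F p.1 p.2.1 p.2.2)
      {p : ℂ × X × E | p.1 ∈ D})
    (k : ℝ) (hk0 : 0 ≤ k) (hk1 : k < 1)
    (hcontr : ∀ u ∈ D, ∀ (x : X) (w w' : E), ‖F u x w - F u x w'‖ ≤ k * ‖w - w'‖)
    (hanal : ∀ x : X, AnalyticOnNhd ℂ (fun p : ℂ × E => F p.1 x p.2)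
      (D ×ˢ (Set.univ : Set E)))
    (hbdd : ∃ M : ℝ, ∀ u ∈ D, ∀ x : X, ‖F u x 0‖ ≤ M) :
    ∃ η : ℂ → X → E,
      ((∃ M : ℝ, ∀ u ∈ D, ∀ x : X, ‖η u x‖ ≤ M) ∧
        ContinuousOn (fun p : ℂ × X => η p.1 p.2) {p : ℂ × X | p.1 ∈ D} ∧
        (∀ u ∈ D, ∀ x : X, η u (f x) = F u x (η u x))) ∧
      (∀ η' : ℂ → X → E,
        ((∃ M : ℝ, ∀ u ∈ D, ∀ x : X, ‖η' u x‖ ≤ M) ∧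
          ContinuousOn (fun p : ℂ × X => η' p.1 p.2) {p : ℂ × X | p.1 ∈ D} ∧
          (∀ u ∈ D, ∀ x : X, η' u (f x) = F u x (η' u x))) →
        ∀ u ∈ D, ∀ x : X, η' u x = η u x) ∧
      (∀ x : X, AnalyticOnNhd ℂ (fun u : ℂ => η u x) D) := by
  obtain ⟨M, hM⟩ := hbdd
  obtain ⟨e, rfl⟩ := isHomeomorph_iff_exists_homeomorph.1 hf
  set s := graphIter F e.symm with hs
  have hstep : ∀ n, ∀ u ∈ D, ∀ x, dist (s n u x) (s (n + 1) u x) ≤ M * k ^ n := by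
    intro n
    induction n with
    | zero =>
      intro u hu x
      simpa [hs, graphIter] using hM u hu (e.symm x)
    | succ n ih =>
      intro u hu x
      have h1 := hcontr u hu (e.symm x) (s n u (e.symm x)) (s (n + 1) u (e.symm x))
      have h2 := ih u hu (e.symm x)
      rw [dist_eq_norm] at h2
      rw [dist_eq_norm]
      calc _ ≤ k * ‖s n u (e.symm x) - s (n + 1) u (e.symm x)‖ := h1
        _ ≤ k * (M * k ^ n) := by gcongr
        _ = M * k ^ (n + 1) := by ring
  -- For `u ∉ D` the limit may be a junk value; only parameters in `D` matter.
  set η : ℂ → X → E := fun u x => limUnder atTop (fun n => s n u x) with hη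
  have hlim : ∀ u ∈ D, ∀ x, Tendsto (fun n => s n u x) atTop (𝓝 (η u x)) := fun u hu x =>
    (cauchySeq_of_le_geometric k M hk1 (fun n => hstep n u hu x)).tendsto_limUnder
  have hdist : ∀ n, ∀ u ∈ D, ∀ x, dist (s n u x) (η u x) ≤ M * k ^ n / (1 - k) :=
    fun n u hu x =>
      dist_le_of_le_geometric_of_tendsto k M hk1 (fun n => hstep n u hu x) (hlim u hu x) n
  have hgeom : ∀ C : ℝ, Tendsto (fun n : ℕ => C * k ^ n) atTop (𝓝 0) := fun C => by
    simpa using (tendsto_pow_atTop_nhds_zero_of_lt_one hk0 hk1).const_mul C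
  have hunif : TendstoUniformlyOn (fun n (p : ℂ × X) => s n p.1 p.2) (fun p => η p.1 p.2) atTop
      {p : ℂ × X | p.1 ∈ D} := by
    rw [Metric.tendstoUniformlyOn_iff]
    intro ε hε
    filter_upwards [(hgeom (M / (1 - k))).eventually_lt_const hε] with n hn p hp
    rw [dist_comm]
    refine (hdist n p.1 hp p.2).trans_lt (lt_of_eq_of_lt ?_ hn)
    ring
  have hscont : ∀ n, ContinuousOn (fun p : ℂ × X => s n p.1 p.2) {p : ℂ × X | p.1 ∈ D} := by
    intro n
    induction n with
    | zero => exact continuousOn_const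
    | succ n ih =>
      have hg : ContinuousOn (fun p : ℂ × X => (p.1, e.symm p.2)) {p : ℂ × X | p.1 ∈ D} := by
        fun_prop
      have h1 : ContinuousOn (fun p : ℂ × X => s n p.1 (e.symm p.2)) {p : ℂ × X | p.1 ∈ D} :=
        ih.comp hg (fun p hp => hp)
      have h2 : ContinuousOn (fun p : ℂ × X => (p.1, e.symm p.2, s n p.1 (e.symm p.2)))
          {p : ℂ × X | p.1 ∈ D} :=
        continuousOn_fst.prodMk ((e.symm.continuous.comp continuous_snd).continuousOn.prodMk h1)
      exact hFcont.comp h2 (fun p hp => hp)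
  have hsdiff : ∀ n x, DifferentiableOn ℂ (fun u => s n u x) D := by
    intro n
    induction n with
    | zero => exact fun x => differentiableOn_const _
    | succ n ih =>
      intro x
      have h2 : DifferentiableOn ℂ (fun u : ℂ => (u, s n u (e.symm x))) D :=
        differentiableOn_id.prodMk (ih (e.symm x))
      exact (hanal (e.symm x)).differentiableOn.comp h2 (fun u hu => ⟨hu, Set.mem_univ _⟩)
  have hbd : ∀ u ∈ D, ∀ x : X, ‖η u x‖ ≤ M / (1 - k) := by
    intro u hu x
    simpa [hs, graphIter] using hdist 0 u hu x
  have hinv : ∀ u ∈ D, ∀ x : X, η u (e x) = F u x (η u x) := by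
    intro u hu x
    have h1 : Tendsto (fun n => s (n + 1) u (e x)) atTop (𝓝 (η u (e x))) :=
      (hlim u hu (e x)).comp (tendsto_add_atTop_nat 1)
    have hFw : Tendsto (fun n => F u x (s n u x)) atTop (𝓝 (F u x (η u x))) := by
      rw [tendsto_iff_norm_sub_tendsto_zero]
      refine squeeze_zero (fun _ => norm_nonneg _) (fun n => hcontr u hu x _ _) ?_
      simpa using (tendsto_iff_norm_sub_tendsto_zero.1 (hlim u hu x)).const_mul k
    refine tendsto_nhds_unique h1 (hFw.congr fun n => ?_)
    simp [hs, graphIter]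
  refine ⟨η, ⟨⟨_, hbd⟩, hunif.continuousOn (Frequently.of_forall hscont), hinv⟩, ?_, ?_⟩
  · rintro η' ⟨⟨M', hM'⟩, -, hinv'⟩ u hu x
    have key : ∀ n x, ‖η' u x - η u x‖ ≤ (M' + M / (1 - k)) * k ^ n := by
      intro n
      induction n with
      | zero =>
        intro x
        simpa using (norm_sub_le _ _).trans (add_le_add (hM' u hu x) (hbd u hu x))
      | succ n ih =>
        intro x
        obtain ⟨y, rfl⟩ := e.surjective x
        rw [hinv' u hu, hinv u hu]
        calc _ ≤ k * ‖η' u y - η u y‖ := hcontr u hu y _ _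
          _ ≤ k * ((M' + M / (1 - k)) * k ^ n) := by gcongr; exact ih y
          _ = _ := by ring
    have h0 := ge_of_tendsto' (hgeom _) (fun n => key n x)
    exact sub_eq_zero.1 (norm_le_zero_iff.1 h0)
  · intro x
    refine DifferentiableOn.analyticOnNhd ?_ hD
    have hx : TendstoUniformlyOn (fun n u => s n u x) (fun u => η u x) atTop D :=
      hunif.comp (fun u : ℂ => (u, x))
    exact hx.tendstoLocallyUniformlyOn.differentiableOn
      (Eventually.of_forall fun n => hsdiff n x) hD
end

section
/- Let (X, d) be a compact metric space and f : X → X a homeomorphism whose inverse is L-Lipschitz for some L ≥ 1. Let E be a real Banach space, r > 0, and let B be the closed ball of radius r about 0 in E. Let F : X × B → B be a map such that: (i) there is k ∈ [0,1) with ‖F(x,w) − F(x,w′)‖ ≤ k‖w − w′‖ for all x ∈ X and w, w′ ∈ B; and (ii) there is C ≥ 0 with ‖F(x,w) − F(y,w)‖ ≤ C · d(x,y) for all x, y ∈ X and w ∈ B. Then there exists a unique continuous map η : X → B with η(f(x)) = F(x, η(x)) for all x ∈ X; moreover, for every α ∈ (0,1] with k·L^α < 1, the map η is α-Hölder: there exists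 K ≥ 0 such that ‖η(x) − η(y)‖ ≤ K · d(x,y)^α for all x, y ∈ X. -/
/-!
The invariant sections are the fixed points of the graph transform
`η ↦ (x ↦ F (f⁻¹ x) (η (f⁻¹ x)))`, a `k`-contraction of the complete space of continuous maps
from `X` to the closed ball with the sup metric, so Banach's fixed point theorem gives existence
and uniqueness.

For the Hölder bound, invariance gives
`‖η x - η y‖ ≤ C d(x', y') + k ‖η x' - η y'‖` with `x' = f⁻¹ x`, `y' = f⁻¹ y`. Compactness bounds
`d(x', y')` by a multiple of `d(x', y')^α ≤ L^α d(x, y)^α`, and since `k L^α < 1` iterating this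
estimate from the trivial bound `2r` yields a geometric series (`holder_of_invariant`).
-/

/-- Quantitative core of the Hölder estimate: a bounded function `δ` on pairs (here the
oscillation `‖η x - η y‖`) satisfying `δ x y ≤ C d(g x, g y) + k δ (g x) (g y)` for an
`L`-Lipschitz `g` is dominated by `d^α` whenever `k L^α < 1`. -/
theorem holder_of_invariant {X : Type*} [MetricSpace X] [CompactSpace X]
    (g : X → X) (L : ℝ) (hL : 1 ≤ L) (hLip : ∀ x y : X, dist (g x) (g y) ≤ L * dist x y)
    (k : ℝ) (hk0 : 0 ≤ k) (hk1 : k < 1) (C : ℝ) (hC : 0 ≤ C) (R : ℝ)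
    (δ : X → X → ℝ) (hδR : ∀ x y, δ x y ≤ R)
    (hδ : ∀ x y, δ x y ≤ C * dist (g x) (g y) + k * δ (g x) (g y))
    (α : ℝ) (hα : α ∈ Set.Ioc (0:ℝ) 1) (hkα : k * L ^ α < 1) :
    ∃ K : ℝ, 0 ≤ K ∧ ∀ x y : X, δ x y ≤ K * dist x y ^ α := by
  obtain ⟨hα0, hα1⟩ := hα
  set M : ℝ := C * Metric.diam (Set.univ : Set X) ^ (1 - α) with hM
  have hM0 : 0 ≤ M := by positivity
  have hLα : 0 ≤ L ^ α := by positivity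
  have hden : 0 < 1 - k * L ^ α := by linarith
  -- The solution of `K = (M + k K) L^α`, the fixed point of the iterated estimate.
  set K : ℝ := M * L ^ α / (1 - k * L ^ α) with hK
  have hK0 : 0 ≤ K := by positivity
  have hKeq : (M + k * K) * L ^ α = K := by
    rw [hK]; field_simp; ring
  have hdist : ∀ x y : X, C * dist x y ≤ M * dist x y ^ α := by
    intro x y
    have h1 : dist x y = dist x y ^ (1 - α) * dist x y ^ α := by
      rw [← Real.rpow_add_of_nonneg dist_nonneg (by linarith) hα0.le]; simp
    have h2 : dist x y ^ (1 - α) ≤ Metric.diam (Set.univ : Set X) ^ (1 - α) :=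
      Real.rpow_le_rpow dist_nonneg
        (Metric.dist_le_diam_of_mem isCompact_univ.isBounded trivial trivial) (by linarith)
    calc C * dist x y = C * dist x y ^ (1 - α) * dist x y ^ α := by
          rw [mul_assoc, ← h1]
      _ ≤ M * dist x y ^ α := by rw [hM]; gcongr
  have hiter : ∀ n : ℕ, ∀ x y : X, δ x y ≤ K * dist x y ^ α + k ^ n * R := by
    intro n
    induction n with
    | zero =>
      intro x y
      have : 0 ≤ K * dist x y ^ α := by positivity
      have := hδR x y
      simp only [pow_zero, one_mul]; linarith
    | succ n ih =>
      intro x y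
      have h3 : dist (g x) (g y) ^ α ≤ L ^ α * dist x y ^ α := by
        rw [← Real.mul_rpow (by linarith) dist_nonneg]
        exact Real.rpow_le_rpow dist_nonneg (hLip x y) hα0.le
      calc δ x y ≤ C * dist (g x) (g y) + k * δ (g x) (g y) := hδ x y
        _ ≤ M * dist (g x) (g y) ^ α + k * (K * dist (g x) (g y) ^ α + k ^ n * R) :=
          add_le_add (hdist _ _) (mul_le_mul_of_nonneg_left (ih _ _) hk0)
        _ = (M + k * K) * dist (g x) (g y) ^ α + k ^ (n + 1) * R := by ring
        _ ≤ (M + k * K) * (L ^ α * dist x y ^ α) + k ^ (n + 1) * R := by gcongr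
        _ = K * dist x y ^ α + k ^ (n + 1) * R := by rw [← mul_assoc, hKeq]
  refine ⟨K, hK0, fun x y => ?_⟩
  have hlim : Filter.Tendsto (fun n : ℕ => K * dist x y ^ α + k ^ n * R) Filter.atTop
      (nhds (K * dist x y ^ α)) := by
    simpa using ((tendsto_pow_atTop_nhds_zero_of_lt_one hk0 hk1).mul_const R).const_add
      (K * dist x y ^ α)
  exact ge_of_tendsto' hlim fun n => hiter n x y

/-- Hölder core of Theorem 8.6: a fiber contraction on a ball bundle over a compact
metric space, over a homeomorphism with `L`-Lipschitz inverse, has a unique continuous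
invariant section, which is `α`-Hölder whenever `k·L^α < 1`. -/
theorem stmt12 {X : Type*} [MetricSpace X] [CompactSpace X]
    (f : X ≃ₜ X) (L : ℝ) (hL : 1 ≤ L)
    (hLip : ∀ x y : X, dist (f.symm x) (f.symm y) ≤ L * dist x y)
    {E : Type*} [NormedAddCommGroup E] [NormedSpace ℝ E] [CompleteSpace E]
    (r : ℝ) (hr : 0 < r)
    (F : X → E → E)
    (hmaps : ∀ x : X, ∀ w ∈ Metric.closedBall (0:E) r,
      F x w ∈ Metric.closedBall (0:E) r)
    (k : ℝ) (hk0 : 0 ≤ k) (hk1 : k < 1)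
    (hcontr : ∀ x : X, ∀ w ∈ Metric.closedBall (0:E) r,
      ∀ w' ∈ Metric.closedBall (0:E) r, ‖F x w - F x w'‖ ≤ k * ‖w - w'‖)
    (C : ℝ) (hC : 0 ≤ C)
    (hlipbase : ∀ (x y : X), ∀ w ∈ Metric.closedBall (0:E) r,
      ‖F x w - F y w‖ ≤ C * dist x y) :
    ∃ η : X → E,
      (∀ x : X, η x ∈ Metric.closedBall (0:E) r) ∧
      Continuous η ∧
      (∀ x : X, η (f x) = F x (η x)) ∧
      (∀ η' : X → E, (∀ x : X, η' x ∈ Metric.closedBall (0:E) r) → Continuous η' →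
        (∀ x : X, η' (f x) = F x (η' x)) → η' = η) ∧
      (∀ α : ℝ, α ∈ Set.Ioc (0:ℝ) 1 → k * L ^ α < 1 →
        ∃ K : ℝ, 0 ≤ K ∧ ∀ x y : X, ‖η x - η y‖ ≤ K * dist x y ^ α) := by
  let B := Metric.closedBall (0:E) r
  have hjoint : ∀ x y : X, ∀ w ∈ B, ∀ w' ∈ B,
      ‖F x w - F y w'‖ ≤ C * dist x y + k * ‖w - w'‖ := by
    intro x y w hw w' hw'
    calc ‖F x w - F y w'‖ ≤ ‖F x w - F y w‖ + ‖F y w - F y w'‖ :=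
          norm_sub_le_norm_sub_add_norm_sub _ _ _
      _ ≤ _ := add_le_add (hlipbase x y w hw) (hcontr y w hw w' hw')
  let G : X × B → B := fun p => ⟨F p.1 p.2, hmaps _ _ p.2.2⟩
  have hG : Continuous G := by
    have hGL : LipschitzWith (Real.toNNReal (C + k)) G := by
      refine LipschitzWith.of_dist_le_mul fun p q => ?_
      rw [Real.coe_toNNReal _ (by positivity), Subtype.dist_eq, dist_eq_norm]
      refine (hjoint p.1 q.1 p.2 p.2.2 q.2 q.2.2).trans ?_
      have h1 : dist p.1 q.1 ≤ dist p q := le_max_left _ _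
      have h2 : ‖(p.2 : E) - q.2‖ ≤ dist p q := by
        rw [← dist_eq_norm]; exact le_max_right _ _
      rw [add_mul]
      gcongr
    exact hGL.continuous
  let T : C(X, B) → C(X, B) := fun η =>
    ⟨fun x => G (f.symm x, η (f.symm x)), by fun_prop⟩
  have hT : ContractingWith (Real.toNNReal k) T := by
    refine ⟨by rwa [Real.toNNReal_lt_one], LipschitzWith.of_dist_le_mul fun η ξ => ?_⟩
    rw [Real.coe_toNNReal _ hk0, ContinuousMap.dist_le (by positivity)]
    intro x
    have h1 : dist (η (f.symm x)) (ξ (f.symm x)) ≤ dist η ξ := ContinuousMap.dist_apply_le_dist _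
    rw [Subtype.dist_eq, dist_eq_norm] at h1 ⊢
    exact (hcontr _ _ (η _).2 _ (ξ _).2).trans (mul_le_mul_of_nonneg_left h1 hk0)
  have : CompleteSpace B := Metric.isClosed_closedBall.completeSpace_coe
  have : Nonempty B := ⟨⟨0, Metric.mem_closedBall_self hr.le⟩⟩
  have : Nonempty C(X, B) := ⟨ContinuousMap.const X (Classical.arbitrary B)⟩
  let η : C(X, B) := ContractingWith.fixedPoint T hT
  have hfix : T η = η := hT.fixedPoint_isFixedPt
  have hinv : ∀ x, (η x : E) = F (f.symm x) (η (f.symm x)) := fun x =>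
    congrArg Subtype.val (DFunLike.congr_fun hfix x).symm
  refine ⟨fun x => η x, fun x => (η x).2, by fun_prop, fun x => ?_, ?_, fun α hα hkα => ?_⟩
  · simpa using hinv (f x)
  · intro η' hη' hc hinv'
    let ξ : C(X, B) := ⟨fun x => ⟨η' x, hη' x⟩, by fun_prop⟩
    have hξ : T ξ = ξ := by
      ext x
      change F (f.symm x) (η' (f.symm x)) = η' x
      rw [← hinv', f.apply_symm_apply]
    have h : ξ = η := hT.fixedPoint_unique hξ
    funext x
    exact congrArg Subtype.val (DFunLike.congr_fun h x)
  · refine holder_of_invariant f.symm L hL hLip k hk0 hk1 C hC (r + r)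
      (fun x y => ‖(η x : E) - η y‖) (fun x y => ?_) (fun x y => ?_) α hα hkα
    · exact (norm_sub_le _ _).trans
        (add_le_add (mem_closedBall_zero_iff.1 (η x).2) (mem_closedBall_zero_iff.1 (η y).2))
    · rw [hinv x, hinv y]
      exact hjoint _ _ _ (η _).2 _ (η _).2
end
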